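/- arXiv:2112.03582 — 2 statements merged into one kernel-verified Lean document; each statement's English description precedes it below -/
import Mathlib

section
/- Conditional relative entropy is functorial with respect to vertical composition. Precisely: let X, Y, X', Y', X'', Y'' be finite sets; p a probability distribution on X; f : X ⇝ Y, f' : X' ⇝ Y', f'' : X'' ⇝ Y'' channels; μ : X → X', μ' : X' → X'', ν : Y → Y', ν' : Y' → Y'' functions; t : Y' ⇝ Y a stochastic section of ν and t' : Y'' ⇝ Y' a stochastic section of ν'; such that ν∘f = f'∘μ and ν'∘f' = f''∘μ' as channels. Let p' = μ∘p. Then, as an identity in [0,∞], ∑_{x∈X} p_x D( f^x, ((t∘t')∘f''∘(μ'∘μ))^x ) = ∑_{x∈X} p_x D( f^x, (t∘f'∘μ)^x ) + ∑_{x'∈X'} p'_{x'} D( f'^{x'}, (t'∘f''∘μ')^{x'} ). -/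
open scoped ENNReal BigOperators

/-- A probability distribution on a finite set `X`. -/
def IsDist {X : Type*} [Fintype X] (p : X → ℝ) : Prop :=
  (∀ x, 0 ≤ p x) ∧ ∑ x, p x = 1

/-- A channel from `X` to `Y`; `f y x` is the probability of output `y` given input `x`. -/
def IsChannel {X Y : Type*} [Fintype Y] (f : Y → X → ℝ) : Prop :=
  (∀ y x, 0 ≤ f y x) ∧ ∀ x, ∑ y, f y x = 1

/-- Composite of channels: `(g ∘ f) z x = ∑ y, g z y * f y x`. -/
noncomputable def chComp {X Y Z : Type*} [Fintype Y]
    (g : Z → Y → ℝ) (f : Y → X → ℝ) : Z → X → ℝ :=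
  fun z x => ∑ y, g z y * f y x

/-- The pure (deterministic) channel associated to a function. -/
def pureCh {X Y : Type*} [DecidableEq Y] (φ : X → Y) : Y → X → ℝ :=
  fun y x => if y = φ x then 1 else 0

/-- Pushforward of a distribution along a channel. -/
noncomputable def push {X Y : Type*} [Fintype X] (f : Y → X → ℝ) (p : X → ℝ) : Y → ℝ :=
  fun y => ∑ x, f y x * p x

/-- The identity channel. -/
def idChan {X : Type*} [DecidableEq X] : X → X → ℝ :=
  fun x x' => if x = x' then 1 else 0

/-- `s : Y ⇝ X` is a stochastic section of `φ : X → Y` if it is a channel and `φ ∘ s = id_Y`. -/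
def IsSection {X Y : Type*} [Fintype X] [Fintype Y] [DecidableEq Y]
    (φ : X → Y) (s : X → Y → ℝ) : Prop :=
  IsChannel s ∧ chComp (pureCh φ) s = idChan

open scoped Classical in
/-- Relative entropy `D(p,q) ∈ [0,∞]`, with the conventions `0·log(0/q) = 0` and
`p·log(p/0) = ∞` for `p ≠ 0`. -/
noncomputable def relEnt {X : Type*} [Fintype X] (p q : X → ℝ) : ℝ≥0∞ :=
  if ∀ x, p x ≠ 0 → q x ≠ 0 then
    ENNReal.ofReal (∑ x, if p x = 0 then 0 else p x * Real.log (p x / q x))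
  else ⊤

theorem gibbs_nonneg {X : Type*} [Fintype X] (p q : X → ℝ) (hp : IsDist p) (hq : IsDist q)
    (h : ∀ x, p x ≠ 0 → q x ≠ 0) :
    0 ≤ ∑ x, if p x = 0 then 0 else p x * Real.log (p x / q x) := by
  have h1 : ∑ x, (p x - q x) ≤ ∑ x, if p x = 0 then 0 else p x * Real.log (p x / q x) := by
    apply Finset.sum_le_sum
    intro x _
    split_ifs with h0
    · have := hq.1 x
      linarith
    · have hpx : 0 < p x := lt_of_le_of_ne (hp.1 x) (Ne.symm h0)
      have hqx : 0 < q x := lt_of_le_of_ne (hq.1 x) (Ne.symm (h x h0))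
      have hl := Real.one_sub_inv_le_log_of_pos (div_pos hpx hqx)
      have := mul_le_mul_of_nonneg_left hl hpx.le
      have e : p x * (1 - (p x / q x)⁻¹) = p x - q x := by
        field_simp
      linarith
  rw [Finset.sum_sub_distrib, hp.2, hq.2] at h1
  linarith

theorem isChannel_comp {X Y Z : Type*} [Fintype Y] [Fintype Z] {g : Z → Y → ℝ} {f : Y → X → ℝ}
    (hg : IsChannel g) (hf : IsChannel f) : IsChannel (chComp g f) := by
  refine ⟨fun z x => Finset.sum_nonneg fun y _ => mul_nonneg (hg.1 _ _) (hf.1 _ _), fun x => ?_⟩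
  simp only [chComp]
  rw [Finset.sum_comm]
  simp only [← Finset.sum_mul, hg.2, one_mul, hf.2]

theorem section_zero {X Y : Type*} [Fintype X] [Fintype Y] [DecidableEq Y]
    {φ : X → Y} {s : X → Y → ℝ} (hs : IsSection φ s) (x : X) (y : Y) (h : y ≠ φ x) :
    s x y = 0 := by
  have h1 := congrFun (congrFun hs.2 (φ x)) y
  simp only [chComp, idChan, pureCh, if_neg (Ne.symm h)] at h1
  rw [Finset.sum_eq_zero_iff_of_nonneg] at h1
  · simpa using h1 x (Finset.mem_univ _)
  · intro i _
    have := hs.1.1 i y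
    split_ifs <;> simp [this]

theorem section_comp {X Y : Type*} [Fintype X] [Fintype Y] [DecidableEq Y]
    {φ : X → Y} {s : X → Y → ℝ} (hs : IsSection φ s) (c : Y → ℝ) (x : X) :
    ∑ y, s x y * c y = s x (φ x) * c (φ x) := by
  apply Finset.sum_eq_single
  · intro y _ h
    rw [section_zero hs x y h, zero_mul]
  · simp

theorem relEnt_chain {Y Y' : Type*} [Fintype Y] [Fintype Y'] [DecidableEq Y']
    (ν : Y → Y') (t : Y → Y' → ℝ) (ht : IsSection ν t) (a : Y → ℝ) (b c : Y' → ℝ)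
    (ha : IsDist a) (hb : IsDist b) (hc : IsDist c)
    (hab : ∀ y', b y' = ∑ y, if y' = ν y then a y else 0) :
    relEnt a (fun y => ∑ y', t y y' * c y') =
      relEnt a (fun y => ∑ y', t y y' * b y') + relEnt b c := by
  have hbd : IsDist (fun y => ∑ y', t y y' * b y') := by
    have := isChannel_comp (X := Unit) (f := fun y' _ => b y') ht.1
      ⟨fun y _ => hb.1 y, fun _ => hb.2⟩
    exact ⟨fun y => this.1 y (), this.2 ()⟩
  have hbpos : ∀ y, a y ≠ 0 → b (ν y) ≠ 0 := by
    intro y hy h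
    rw [hab, Finset.sum_eq_zero_iff_of_nonneg] at h
    · exact hy (by simpa using h y (Finset.mem_univ _))
    · intro i _
      have := ha.1 i
      split_ifs <;> simp [this]
  have hbex : ∀ y', b y' ≠ 0 → ∃ y, y' = ν y ∧ a y ≠ 0 := by
    intro y' h
    rw [hab] at h
    obtain ⟨y, _, hy⟩ := Finset.exists_ne_zero_of_sum_ne_zero h
    refine ⟨y, ?_⟩
    simpa using hy
  have hsum : ∀ g : Y' → ℝ, ∑ y', b y' * g y' = ∑ y, a y * g (ν y) := by
    intro g
    simp only [hab, Finset.sum_mul]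
    rw [Finset.sum_comm]
    simp [ite_mul]
  by_cases h1 : ∀ y, a y ≠ 0 → (fun y => ∑ y', t y y' * b y') y ≠ 0
  · by_cases h2 : ∀ y', b y' ≠ 0 → c y' ≠ 0
    · have h3 : ∀ y, a y ≠ 0 → (fun y => ∑ y', t y y' * c y') y ≠ 0 := by
        intro y hy
        have := h1 y hy
        simp only [section_comp ht] at this ⊢
        exact mul_ne_zero (left_ne_zero_of_mul this) (h2 _ (hbpos y hy))
      unfold relEnt
      rw [if_pos h1, if_pos h2, if_pos h3, ← ENNReal.ofReal_add (gibbs_nonneg _ _ ha hbd h1)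
        (gibbs_nonneg _ _ hb hc h2)]
      congr 1
      have e : (∑ x, if b x = 0 then 0 else b x * Real.log (b x / c x)) =
          ∑ y, a y * Real.log (b (ν y) / c (ν y)) := by
        rw [← hsum (fun y' => Real.log (b y' / c y'))]
        refine Finset.sum_congr rfl fun y _ => ?_
        split_ifs with h <;> simp [h]
      rw [e, ← Finset.sum_add_distrib]
      refine Finset.sum_congr rfl fun y _ => ?_
      split_ifs with h
      · simp [h]
      · have k1 := h1 y h
        simp only [section_comp ht] at k1 ⊢
        have k2 := hbpos y h
        have k3 := h2 _ k2
        have k4 := left_ne_zero_of_mul k1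
        rw [Real.log_div h (mul_ne_zero k4 k3), Real.log_div h k1, Real.log_div k2 k3,
          Real.log_mul k4 k3, Real.log_mul k4 k2]
        ring
    · have h3 : ¬ ∀ y, a y ≠ 0 → (fun y => ∑ y', t y y' * c y') y ≠ 0 := by
        intro h3
        apply h2
        intro y' hy'
        obtain ⟨y, rfl, hy⟩ := hbex y' hy'
        have := h3 y hy
        simp only [section_comp ht] at this
        exact right_ne_zero_of_mul this
      unfold relEnt
      rw [if_neg h3, if_neg h2, add_top]
  · have h3 : ¬ ∀ y, a y ≠ 0 → (fun y => ∑ y', t y y' * c y') y ≠ 0 := by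
      intro h3
      apply h1
      intro y hy
      have := h3 y hy
      simp only [section_comp ht] at this ⊢
      exact mul_ne_zero (left_ne_zero_of_mul this) (hbpos y hy)
    unfold relEnt
    rw [if_neg h3, if_neg h1, top_add]

theorem chComp_pure {X Y Z : Type*} [Fintype Y] [DecidableEq Y] (g : Z → Y → ℝ) (φ : X → Y)
    (z : Z) (x : X) : chComp g (pureCh φ) z x = g z (φ x) := by
  simp [chComp, pureCh]

/-- Conditional relative entropy is functorial with respect to vertical composition. -/
theorem condRelEnt_vertical_comp {X Y X' Y' X'' Y'' : Type*}
    [Fintype X] [Fintype Y] [Fintype X'] [Fintype Y'] [Fintype X''] [Fintype Y'']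
    [DecidableEq X'] [DecidableEq Y'] [DecidableEq X''] [DecidableEq Y'']
    (p : X → ℝ) (f : Y → X → ℝ) (f' : Y' → X' → ℝ) (f'' : Y'' → X'' → ℝ)
    (μ : X → X') (μ' : X' → X'') (ν : Y → Y') (ν' : Y' → Y'')
    (t : Y → Y' → ℝ) (t' : Y' → Y'' → ℝ)
    (hp : IsDist p) (hf : IsChannel f) (hf' : IsChannel f') (hf'' : IsChannel f'')
    (ht : IsSection ν t) (ht' : IsSection ν' t')
    (hcomm : chComp (pureCh ν) f = chComp f' (pureCh μ))
    (hcomm' : chComp (pureCh ν') f' = chComp f'' (pureCh μ')) :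
    (∑ x, ENNReal.ofReal (p x) *
        relEnt (fun y => f y x)
          (fun y => chComp (chComp t t') (chComp f'' (pureCh (μ' ∘ μ))) y x))
      = (∑ x, ENNReal.ofReal (p x) *
          relEnt (fun y => f y x) (fun y => chComp t (chComp f' (pureCh μ)) y x))
        + ∑ x', ENNReal.ofReal (push (pureCh μ) p x') *
            relEnt (fun y' => f' y' x')
              (fun y' => chComp t' (chComp f'' (pureCh μ')) y' x') := by
  have hpush : ∀ g : X' → ℝ≥0∞, ∑ x', ENNReal.ofReal (push (pureCh μ) p x') * g x' =
      ∑ x, ENNReal.ofReal (p x) * g (μ x) := by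
    intro g
    have e : ∀ x', ENNReal.ofReal (push (pureCh μ) p x') =
        ∑ x, if x' = μ x then ENNReal.ofReal (p x) else 0 := by
      intro x'
      unfold push pureCh
      rw [ENNReal.ofReal_sum_of_nonneg]
      · refine Finset.sum_congr rfl fun x _ => ?_
        split_ifs <;> simp
      · intro i _
        have := hp.1 i
        split_ifs <;> simp [this]
    simp only [e, Finset.sum_mul]
    rw [Finset.sum_comm]
    simp [ite_mul]
  rw [hpush, ← Finset.sum_add_distrib]
  refine Finset.sum_congr rfl fun x _ => ?_
  rw [← mul_add]
  congr 1
  have hc := isChannel_comp ht'.1 hf''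
  have key := relEnt_chain ν t ht (fun y => f y x) (fun y' => f' y' (μ x))
    (fun y' => chComp t' f'' y' (μ' (μ x))) ⟨fun y => hf.1 y x, hf.2 x⟩
    ⟨fun y => hf'.1 y _, hf'.2 _⟩ ⟨fun y => hc.1 y _, hc.2 _⟩ (by
      intro y'
      have := congrFun (congrFun hcomm y') x
      rw [chComp_pure] at this
      rw [← this]
      simp [chComp, pureCh])
  have e1 : (fun y => chComp (chComp t t') (chComp f'' (pureCh (μ' ∘ μ))) y x) =
      fun y => ∑ y', t y y' * chComp t' f'' y' (μ' (μ x)) := by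
    funext y
    have e0 : chComp f'' (pureCh (μ' ∘ μ)) = fun z x => f'' z (μ' (μ x)) := by
      funext z x
      rw [chComp_pure]; rfl
    rw [e0]
    simp only [chComp, Finset.sum_mul, Finset.mul_sum]
    rw [Finset.sum_comm]
    simp only [mul_assoc]
  have e2 : (fun y => chComp t (chComp f' (pureCh μ)) y x) =
      fun y => ∑ y', t y y' * f' y' (μ x) := by
    funext y
    have e0 : chComp f' (pureCh μ) = fun z x => f' z (μ x) := by
      funext z x
      rw [chComp_pure]
    rw [e0]; rfl
  have e3 : (fun y' => chComp t' (chComp f'' (pureCh μ')) y' (μ x)) =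
      fun y' => chComp t' f'' y' (μ' (μ x)) := by
    funext y
    have e0 : chComp f'' (pureCh μ') = fun z x => f'' z (μ' x) := by
      funext z x
      rw [chComp_pure]
    rw [e0]; rfl
  rw [e1, e2, e3]
  exact key
end

section
/- 2-relative entropy is convex linear. Precisely: let (X, p) be a finite probability space, and for each x ∈ X let ♠^x be a 2-morphism datum with finite sets U_x, V_x, U'_x, V'_x, probability distribution q^x on U_x, channel f_x : U_x ⇝ V_x, functions μ^x : U_x → U'_x and ν^x : V_x → V'_x, channel f'_x : U'_x ⇝ V'_x, stochastic sections s^x : U'_x ⇝ U_x of μ^x and t^x : V'_x ⇝ V_x of ν^x, satisfying ν^x∘f_x = f'_x∘μ^x. Define RE_2(♠^x) = D(q^x, s^x∘μ^x∘q^x) + ∑_{u∈U_x} q^x_u D(f_x^u, (t^x∘f'_x∘μ^x)^u). Form the convex combination ⊕_{x∈X} p_x ♠^x on the disjoint unions ∐_x U_x, ∐_x V_x, ∐_x U'_x, ∐_x V'_x, with distribution (x,u) ↦ p_x q^x_u, channels ⊕_x f_x and ⊕_x f'_x (equal to the x-th channel on the x-th components and 0 between different components), functions ⊕_x μ^x and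 ⊕_x ν^x acting componentwise, and sections ⊕_x s^x and ⊕_x t^x. Then RE_2( ⊕_{x∈X} p_x ♠^x ) = ∑_{x∈X} p_x RE_2(♠^x), as an identity in [0,∞]. -/
open scoped ENNReal BigOperators

/-- The direct sum of a family of channels `f x : A x ⇝ B x` over disjoint unions,
equal to `f x` on the `x`-th components and `0` between different components. -/
def dSum {X : Type*} [DecidableEq X] {A B : X → Type*}
    (f : ∀ x, B x → A x → ℝ) : (Σ x, B x) → (Σ x, A x) → ℝ :=
  fun b a => if h : a.1 = b.1 then f b.1 b.2 (h ▸ a.2) else 0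

theorem dSum_same {X : Type*} [DecidableEq X] {A B : X → Type*}
    (f : ∀ x, B x → A x → ℝ) (x : X) (b : B x) (a : A x) :
    dSum f ⟨x, b⟩ ⟨x, a⟩ = f x b a := by
  simp [dSum]

theorem dSum_ne {X : Type*} [DecidableEq X] {A B : X → Type*}
    (f : ∀ x, B x → A x → ℝ) {x y : X} (h : x ≠ y) (b : B y) (a : A x) :
    dSum f ⟨y, b⟩ ⟨x, a⟩ = 0 := by
  simp [dSum, h]

theorem pureCh_sigma {X : Type*} [DecidableEq X] {A B : X → Type*}
    [∀ x, DecidableEq (B x)] (μ : ∀ x, A x → B x) :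
    pureCh (fun u : Σ x, A x => (⟨u.1, μ u.1 u.2⟩ : Σ x, B x))
      = dSum (fun x => pureCh (μ x)) := by
  funext ⟨y, b⟩ ⟨x, a⟩
  by_cases h : x = y
  · subst h
    rw [dSum_same]
    simp [pureCh]
  · rw [dSum_ne _ h]
    have h' : y ≠ x := fun e => h e.symm
    simp [pureCh, h']

theorem push_dSum {X : Type*} [Fintype X] [DecidableEq X] {A B : X → Type*}
    [∀ x, Fintype (A x)] (f : ∀ x, B x → A x → ℝ) (p : X → ℝ) (q : ∀ x, A x → ℝ) :
    push (dSum f) (fun u : Σ x, A x => p u.1 * q u.1 u.2)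
      = fun v : Σ x, B x => p v.1 * push (f v.1) (q v.1) v.2 := by
  funext ⟨y, b⟩
  simp only [push]
  rw [Fintype.sum_sigma, Finset.sum_eq_single y]
  · simp only [dSum_same, Finset.mul_sum]
    exact Finset.sum_congr rfl fun _ _ => by ring
  · intro x _ h
    exact Finset.sum_eq_zero fun a _ => by rw [dSum_ne f h]; simp
  · simp

theorem chComp_dSum {X : Type*} [Fintype X] [DecidableEq X] {A B C : X → Type*}
    [∀ x, Fintype (B x)] (g : ∀ x, C x → B x → ℝ) (f : ∀ x, B x → A x → ℝ) :
    chComp (dSum g) (dSum f) = dSum (fun x => chComp (g x) (f x)) := by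
  funext ⟨z, c⟩ ⟨x, a⟩
  simp only [chComp]
  rw [Fintype.sum_sigma, Finset.sum_eq_single z]
  · by_cases h : x = z
    · subst h
      simp only [dSum_same, chComp]
    · simp only [dSum_ne _ h, mul_zero, Finset.sum_const_zero]
  · intro y _ h
    exact Finset.sum_eq_zero fun b _ => by rw [dSum_ne g h]; simp
  · simp

theorem relEnt_dSum {X : Type*} [Fintype X] [DecidableEq X] {A B : X → Type*}
    [∀ x, Fintype (B x)] (f g : ∀ x, B x → A x → ℝ) (x : X) (a : A x) :
    relEnt (fun v : Σ x, B x => dSum f v ⟨x, a⟩) (fun v : Σ x, B x => dSum g v ⟨x, a⟩)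
      = relEnt (fun v => f x v a) (fun v => g x v a) := by
  classical
  unfold relEnt
  congr 1
  · apply propext
    constructor
    · intro h v
      have := h ⟨x, v⟩
      simpa only [dSum_same] using this
    · rintro h ⟨y, v⟩
      by_cases e : x = y
      · subst e
        simpa only [dSum_same] using h v
      · simp [dSum_ne _ e]
  · congr 1
    rw [Fintype.sum_sigma, Finset.sum_eq_single x]
    · simp only [dSum_same]
    · intro y _ h
      exact Finset.sum_eq_zero fun v _ => by simp [dSum_ne f h.symm]
    · simp

open scoped Classical in
theorem gibbs {A : Type*} [Fintype A] (q r : A → ℝ) (hq : IsDist q) (hr : IsDist r)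
    (h : ∀ x, q x ≠ 0 → r x ≠ 0) :
    0 ≤ ∑ x, if q x = 0 then 0 else q x * Real.log (q x / r x) := by
  have key : ∑ x, (q x - r x) ≤ ∑ x, if q x = 0 then 0 else q x * Real.log (q x / r x) := by
    apply Finset.sum_le_sum
    intro x _
    split_ifs with h0
    · have := hr.1 x
      linarith
    · have hq0 : 0 < q x := lt_of_le_of_ne (hq.1 x) (Ne.symm h0)
      have hr0 : 0 < r x := lt_of_le_of_ne (hr.1 x) (Ne.symm (h x h0))
      have h1 := Real.log_le_sub_one_of_pos (div_pos hr0 hq0)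
      have h2 : Real.log (q x / r x) = - Real.log (r x / q x) := by
        rw [← Real.log_inv, inv_div]
      have h3 := mul_le_mul_of_nonneg_left h1 hq0.le
      have h4 : q x * (r x / q x - 1) = r x - q x := by field_simp
      rw [h2]
      linarith
  rw [Finset.sum_sub_distrib, hq.2, hr.2, sub_self] at key
  exact key

theorem relEnt_sigma {X : Type*} [Fintype X] {A : X → Type*} [∀ x, Fintype (A x)]
    (p : X → ℝ) (q r : ∀ x, A x → ℝ) (hp : IsDist p) (hq : ∀ x, IsDist (q x))
    (hr : ∀ x, IsDist (r x)) :
    relEnt (fun u : Σ x, A x => p u.1 * q u.1 u.2) (fun u : Σ x, A x => p u.1 * r u.1 u.2)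
      = ∑ x, ENNReal.ofReal (p x) * relEnt (q x) (r x) := by
  classical
  by_cases h : ∀ x, p x ≠ 0 → ∀ a, q x a ≠ 0 → r x a ≠ 0
  · have hl : ∀ u : Σ x, A x, p u.1 * q u.1 u.2 ≠ 0 → p u.1 * r u.1 u.2 ≠ 0 := fun u hu =>
      mul_ne_zero (left_ne_zero_of_mul hu)
        (h _ (left_ne_zero_of_mul hu) _ (right_ne_zero_of_mul hu))
    have hx : ∀ x, ENNReal.ofReal (p x) * relEnt (q x) (r x) = ENNReal.ofReal
        (p x * ∑ a, if q x a = 0 then 0 else q x a * Real.log (q x a / r x a)) := by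
      intro x
      by_cases h0 : p x = 0
      · simp [h0]
      · rw [ENNReal.ofReal_mul (hp.1 x), relEnt, if_pos (h x h0)]
    rw [Finset.sum_congr rfl fun x _ => hx x, ← ENNReal.ofReal_sum_of_nonneg]
    · rw [relEnt, if_pos hl, Fintype.sum_sigma]
      congr 1
      refine Finset.sum_congr rfl fun x _ => ?_
      rw [Finset.mul_sum]
      refine Finset.sum_congr rfl fun a _ => ?_
      by_cases h0 : p x = 0
      · simp [h0]
      · by_cases h1 : q x a = 0
        · simp [h1]
        · simp only [mul_eq_zero, h0, h1, or_self, if_false]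
          rw [mul_div_mul_left _ _ h0, mul_assoc]
    · intro x _
      by_cases h0 : p x = 0
      · simp [h0]
      · exact mul_nonneg (hp.1 x) (gibbs _ _ (hq x) (hr x) (h x h0))
  · push Not at h
    obtain ⟨x, h0, a, h1, h2⟩ := h
    rw [relEnt, if_neg (fun H => H ⟨x, a⟩ (mul_ne_zero h0 h1) (by simp [h2]))]
    symm
    rw [ENNReal.sum_eq_top]
    refine ⟨x, Finset.mem_univ _, ?_⟩
    rw [relEnt, if_neg (fun H => H a h1 h2)]
    apply ENNReal.mul_top
    have : 0 < p x := lt_of_le_of_ne (hp.1 x) (Ne.symm h0)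
    simpa using this

theorem isDist_push {A B : Type*} [Fintype A] [Fintype B] (f : B → A → ℝ) (q : A → ℝ)
    (hf : IsChannel f) (hq : IsDist q) : IsDist (push f q) := by
  refine ⟨fun y => Finset.sum_nonneg fun x _ => mul_nonneg (hf.1 y x) (hq.1 x), ?_⟩
  simp only [push]
  rw [Finset.sum_comm]
  simp only [← Finset.sum_mul, hf.2, one_mul, hq.2]

theorem isChannel_pureCh {A B : Type*} [Fintype B] [DecidableEq B] (φ : A → B) :
    IsChannel (pureCh φ) := by
  refine ⟨fun y x => ?_, fun x => by simp [pureCh]⟩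
  unfold pureCh
  split_ifs <;> norm_num

/-- 2-relative entropy is convex linear. -/
theorem relEnt2_convex_linear {X : Type*} [Fintype X] [DecidableEq X]
    {U V U' V' : X → Type*}
    [∀ x, Fintype (U x)] [∀ x, Fintype (V x)]
    [∀ x, Fintype (U' x)] [∀ x, Fintype (V' x)]
    [∀ x, DecidableEq (U' x)] [∀ x, DecidableEq (V' x)]
    (p : X → ℝ) (q : ∀ x, U x → ℝ)
    (f : ∀ x, V x → U x → ℝ) (f' : ∀ x, V' x → U' x → ℝ)
    (μ : ∀ x, U x → U' x) (ν : ∀ x, V x → V' x)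
    (s : ∀ x, U x → U' x → ℝ) (t : ∀ x, V x → V' x → ℝ)
    (hp : IsDist p) (hq : ∀ x, IsDist (q x))
    (hf : ∀ x, IsChannel (f x)) (hf' : ∀ x, IsChannel (f' x))
    (hs : ∀ x, IsSection (μ x) (s x)) (ht : ∀ x, IsSection (ν x) (t x))
    (hcomm : ∀ x, chComp (pureCh (ν x)) (f x) = chComp (f' x) (pureCh (μ x))) :
    (relEnt (fun u : Σ x, U x => p u.1 * q u.1 u.2)
        (push (dSum s)
          (push (pureCh (fun u : Σ x, U x => (⟨u.1, μ u.1 u.2⟩ : Σ x, U' x)))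
            (fun u : Σ x, U x => p u.1 * q u.1 u.2)))
      + ∑ u : Σ x, U x, ENNReal.ofReal (p u.1 * q u.1 u.2) *
          relEnt (fun v : Σ x, V x => dSum f v u)
            (fun v : Σ x, V x =>
              chComp (dSum t)
                (chComp (dSum f')
                  (pureCh (fun u : Σ x, U x => (⟨u.1, μ u.1 u.2⟩ : Σ x, U' x)))) v u))
      = ∑ x, ENNReal.ofReal (p x) *
          (relEnt (q x) (push (s x) (push (pureCh (μ x)) (q x)))
            + ∑ u, ENNReal.ofReal (q x u) *
                relEnt (fun v => f x v u)
                  (fun v => chComp (t x) (chComp (f' x) (pureCh (μ x))) v u)) := by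
  rw [pureCh_sigma, push_dSum, push_dSum (f := s) (q := fun x => push (pureCh (μ x)) (q x)),
    chComp_dSum, chComp_dSum,
    relEnt_sigma p q (fun x => push (s x) (push (pureCh (μ x)) (q x))) hp hq
      (fun x => isDist_push _ _ (hs x).1 (isDist_push _ _ (isChannel_pureCh _) (hq x))),
    Fintype.sum_sigma, ← Finset.sum_add_distrib]
  refine Finset.sum_congr rfl fun x _ => ?_
  rw [mul_add, Finset.mul_sum]
  congr 1
  refine Finset.sum_congr rfl fun u _ => ?_
  rw [relEnt_dSum, ENNReal.ofReal_mul (hp.1 x), mul_assoc]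
end
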